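/- arXiv:2005.12355 — 2 statements merged into one kernel-verified Lean document; each statement's English description precedes it below -/
import Mathlib

section
/- I(F) coincides with the exhaustive ideal of φ: for every A ⊆ ℕ, μ_n(A) → 0 as n → ∞ if and only if lim_{n→∞} sup_{k∈ℕ} μ_k(A \ {0,1,…,n}) = 0. -/
open Filter

/-- `mu F n A = |A ∩ F n| / |F n|`. -/
noncomputable def mu (F : ℕ → Finset ℕ) (n : ℕ) (A : Set ℕ) : ℝ :=
  (A ∩ (F n : Set ℕ)).ncard / (F n).card

/-!
The values `μ_k(A \ {0, …, n})` are dominated by `μ_k(A)` and, for fixed `k`, vanish once `n` passes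
`max F_k`. If `μ_k(A) → 0`, only finitely many `k` matter for a given precision, so the supremum
over `k` tends to `0`. Conversely `μ_k(A) ≤ μ_k(A \ {0, …, n}) + μ_k({0, …, n})`: the first term is
at most the supremum, and for fixed `n` the second tends to `0` because `|F_k| → ∞`.
-/

section IteratedLimits

variable {ι α : Type*} {f : ι → α → ℝ} {g : ι → ℝ} {l : Filter α}

theorem tendsto_iSup_zero_of_dominated (hf₀ : ∀ i a, 0 ≤ f i a) (hfg : ∀ i a, f i a ≤ g i)
    (hg : Tendsto g cofinite (nhds 0)) (hf : ∀ i, Tendsto (f i) l (nhds 0)) :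
    Tendsto (fun a => ⨆ i, f i a) l (nhds 0) := by
  refine tendsto_order.2 ⟨fun b hb => .of_forall fun a =>
    hb.trans_le (Real.iSup_nonneg fun i => hf₀ i a), fun ε hε => ?_⟩
  have hfinite : {i | ¬g i < ε / 2}.Finite := hg.eventually_lt_const (half_pos hε)
  have hsmall : ∀ᶠ a in l, ∀ i ∈ {i | ¬g i < ε / 2}, f i a < ε / 2 :=
    (eventually_all_finite hfinite).2 fun i _ => (hf i).eventually_lt_const (half_pos hε)
  filter_upwards [hsmall] with a ha
  refine (Real.iSup_le (fun i => ?_) (half_pos hε).le).trans_lt (half_lt_self hε)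
  by_cases hi : g i < ε / 2
  · exact (hfg i a).trans hi.le
  · exact (ha i hi).le

theorem tendsto_zero_of_le_add_of_tendsto_iSup [l.NeBot] {l' : Filter ι} {r : ι → α → ℝ}
    (hg₀ : ∀ i, 0 ≤ g i) (hle : ∀ i a, g i ≤ f i a + r i a)
    (hbdd : ∀ a, BddAbove (Set.range fun i => f i a))
    (hf : Tendsto (fun a => ⨆ i, f i a) l (nhds 0))
    (hr : ∀ a, Tendsto (fun i => r i a) l' (nhds 0)) :
    Tendsto g l' (nhds 0) := by
  refine tendsto_order.2 ⟨fun b hb => .of_forall fun i => hb.trans_le (hg₀ i), fun ε hε => ?_⟩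
  obtain ⟨a, ha⟩ := (hf.eventually_lt_const (half_pos hε)).exists
  filter_upwards [(hr a).eventually_lt_const (half_pos hε)] with i hi
  calc
    g i ≤ f i a + r i a := hle i a
    _ ≤ (⨆ j, f j a) + r i a := by gcongr; exact le_ciSup (hbdd a) i
    _ < ε / 2 + ε / 2 := add_lt_add ha hi
    _ = ε := add_halves ε

end IteratedLimits

/-- A finite real-valued submeasure on the subsets of `α`: a monotone, finitely subadditive set
function vanishing on `∅`. It isolates the properties of the `μ_n` on which the theorem rests. -/
structure IsSubmeasure {α : Type*} (ν : Set α → ℝ) : Prop where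
  empty : ν ∅ = 0
  mono : Monotone ν
  union_le (A B : Set α) : ν (A ∪ B) ≤ ν A + ν B

namespace IsSubmeasure

variable {α : Type*} {ν : Set α → ℝ}

theorem nonneg (hν : IsSubmeasure ν) (A : Set α) : 0 ≤ ν A :=
  hν.empty.ge.trans (hν.mono A.empty_subset)

theorem le_sdiff_add (hν : IsSubmeasure ν) (A B : Set α) : ν A ≤ ν (A \ B) + ν B :=
  (hν.mono (Set.subset_sdiff_union A B)).trans (hν.union_le _ _)

end IsSubmeasure

theorem stmt5_general {ι α : Type*} [Preorder α] [IsDirectedOrder α] [Nonempty α]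
    {ν : ι → Set α → ℝ} (hν : ∀ i, IsSubmeasure (ν i))
    (hbdd : BddAbove (Set.range fun i => ν i Set.univ))
    (htail : ∀ i, Tendsto (fun a => ν i (Set.Iic a)ᶜ) atTop (nhds 0))
    (hinit : ∀ a, Tendsto (fun i => ν i (Set.Iic a)) cofinite (nhds 0)) (A : Set α) :
    Tendsto (fun i => ν i A) cofinite (nhds 0) ↔
      Tendsto (fun a => ⨆ i, ν i (A \ Set.Iic a)) atTop (nhds 0) := by
  constructor
  · intro hA
    have htailA (i : ι) : Tendsto (fun a => ν i (A \ Set.Iic a)) atTop (nhds 0) :=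
      squeeze_zero (fun _ => (hν i).nonneg _)
        (fun _ => (hν i).mono fun _ hx => hx.2) (htail i)
    exact tendsto_iSup_zero_of_dominated (fun i _ => (hν i).nonneg _)
      (fun i _ => (hν i).mono Set.sdiff_subset) hA htailA
  · intro hsup
    have hbddA (a : α) : BddAbove (Set.range fun i => ν i (A \ Set.Iic a)) :=
      hbdd.range_mono _ fun i => (hν i).mono (Set.subset_univ _)
    exact tendsto_zero_of_le_add_of_tendsto_iSup (fun i => (hν i).nonneg A)
      (fun i _ => (hν i).le_sdiff_add A _) hbddA hsup hinit

section Mu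

variable (F : ℕ → Finset ℕ)

theorem isSubmeasure_mu (n : ℕ) : IsSubmeasure (mu F n) where
  empty := by simp [mu]
  mono A B hAB := by
    have hfin : (B ∩ (F n : Set ℕ)).Finite := (F n).finite_toSet.inter_of_right B
    unfold mu
    gcongr
  union_le A B := by
    unfold mu
    rw [← add_div, Set.union_inter_distrib_right]
    gcongr
    exact_mod_cast Set.ncard_union_le _ _

theorem mu_le_one (n : ℕ) (A : Set ℕ) : mu F n A ≤ 1 := by
  refine div_le_one_of_le₀ ?_ (Nat.cast_nonneg _)
  rw [← Set.ncard_coe_finset]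
  exact_mod_cast Set.ncard_le_ncard Set.inter_subset_right (F n).finite_toSet

theorem bddAbove_range_mu (A : Set ℕ) : BddAbove (Set.range fun n => mu F n A) :=
  ⟨1, Set.forall_mem_range.2 fun n => mu_le_one F n A⟩

theorem tendsto_mu_compl_Iic (k : ℕ) :
    Tendsto (fun n => mu F k (Set.Iic n)ᶜ) atTop (nhds 0) := by
  have hbound : ∀ᶠ n in atTop, ∀ x ∈ F k, x ≤ n :=
    (eventually_all_finset (F k)).2 fun x _ => eventually_ge_atTop x
  refine tendsto_nhds_of_eventually_eq (hbound.mono fun n hn => ?_)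
  have hdisj : (Set.Iic n)ᶜ ∩ (F k : Set ℕ) = ∅ :=
    (Set.disjoint_compl_left_iff_subset.2 hn).inter_eq
  rw [mu, hdisj, Set.ncard_empty, Nat.cast_zero, zero_div]

variable {F}

theorem tendsto_mu_of_finite {l : Filter ℕ} (hcard : Tendsto (fun n => (F n).card) l atTop)
    {A : Set ℕ} (hA : A.Finite) : Tendsto (fun n => mu F n A) l (nhds 0) := by
  have hle (n : ℕ) : mu F n A ≤ A.ncard / (F n).card := by
    unfold mu
    gcongr
    exact Set.inter_subset_left
  exact squeeze_zero (fun n => (isSubmeasure_mu F n).nonneg A) hle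
    ((tendsto_natCast_atTop_atTop.comp hcard).const_div_atTop _)

end Mu

/-- `I(F) = Exh(φ)` where `φ(A) = sup_k μ_k(A)`: `μ_n(A) → 0` iff
`sup_k μ_k(A \ {0,…,n}) → 0` as `n → ∞`. -/
theorem stmt5 (F : ℕ → Finset ℕ) (hne : ∀ n, (F n).Nonempty)
    (hcard : Tendsto (fun n => (F n).card) atTop atTop) (A : Set ℕ) :
    Tendsto (fun n => mu F n A) atTop (nhds 0) ↔
      Tendsto (fun n => ⨆ k, mu F k (A \ Set.Iic n)) atTop (nhds 0) := by
  simpa only [Nat.cofinite_eq_atTop] using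
    stmt5_general (isSubmeasure_mu F) (bddAbove_range_mu F Set.univ) (tendsto_mu_compl_Iic F)
      (fun n => tendsto_mu_of_finite (Nat.cofinite_eq_atTop ▸ hcard) (Set.finite_Iic n)) A
end

section
/- The set c_{0,I(F)} = {f ∈ ℓ∞ : for every ε > 0, μ_n({i ∈ ℕ : ε ≤ |f i|}) → 0 as n → ∞} of bounded real sequences that are I(F)-convergent to 0 is a closed linear subspace of ℓ∞ (the Banach space of bounded real sequences with the supremum norm). -/
open Filter

/-!
The complements of the members of an ideal form a filter, and convergence to `0` with respect to the
ideal is ordinary convergence along this filter. So the theorem is an instance of the fact that, for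
any filter, the vectors of an `ℓᵖ` space whose coordinates tend to `0` form a closed subspace, the
`ℓᵖ` norm being at least the supremum norm.
-/

open scoped ENNReal Topology

section LpTendstoZero

variable {ι : Type*} (𝕜 : Type*) (E : ι → Type*) (p : ℝ≥0∞) (l : Filter ι)
  [NormedRing 𝕜] [∀ i, NormedAddCommGroup (E i)] [∀ i, Module 𝕜 (E i)]
  [∀ i, IsBoundedSMul 𝕜 (E i)]

/-- The subspace of those `f` in `ℓᵖ` whose coordinates tend to `0` along the filter `l`. For
`p = ∞` and `l` the filter dual to an ideal `I`, this is the space `c_{0,I}`. As the coordinates of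
`f` may lie in different spaces, the convergence is that of their norms. -/
def lpTendstoZero : Submodule 𝕜 (lp E p) where
  carrier := {f | Tendsto (fun i => ‖f i‖) l (𝓝 0)}
  zero_mem' := by simp [tendsto_const_nhds]
  add_mem' {f g} hf hg :=
    squeeze_zero (fun _ => norm_nonneg _) (fun i => norm_add_le (f i) (g i))
      (by simpa only [add_zero] using hf.add hg)
  smul_mem' c f hf :=
    squeeze_zero (fun _ => norm_nonneg _) (fun i => norm_smul_le c (f i))
      (by simpa only [mul_zero] using hf.const_mul ‖c‖)

variable {𝕜 E p l} in
theorem mem_lpTendstoZero_iff {f : lp E p} :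
    f ∈ lpTendstoZero 𝕜 E p l ↔ ∀ ε > 0, ∀ᶠ i in l, ‖f i‖ < ε := by
  change Tendsto (fun i => ‖f i‖) l (𝓝 0) ↔ _
  simp only [Metric.tendsto_nhds, dist_zero_right, norm_norm]

theorem isClosed_lpTendstoZero [Fact (1 ≤ p)] :
    IsClosed (lpTendstoZero 𝕜 E p l : Set (lp E p)) := by
  refine isClosed_of_closure_subset fun f hf => mem_lpTendstoZero_iff.2 fun ε hε => ?_
  obtain ⟨g, hg, hfg⟩ := Metric.mem_closure_iff.1 hf (ε / 2) (half_pos hε)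
  have hp : p ≠ 0 := (zero_lt_one.trans_le Fact.out).ne'
  filter_upwards [mem_lpTendstoZero_iff.1 hg (ε / 2) (half_pos hε)] with i hgi
  calc
    ‖f i‖ ≤ ‖f i - g i‖ + ‖g i‖ := norm_le_norm_sub_add _ _
    _ ≤ dist f g + ‖g i‖ := by
      rw [dist_eq_norm]
      gcongr
      exact lp.norm_apply_le_norm hp (f - g) i
    _ < ε / 2 + ε / 2 := add_lt_add hfg hgi
    _ = ε := add_halves ε

theorem stmt11_general [Fact (1 ≤ p)] :
    ∃ S : Submodule 𝕜 (lp E p),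
      (S : Set (lp E p)) = {f : lp E p | ∀ ε : ℝ, 0 < ε → ∀ᶠ i in l, ‖f i‖ < ε} ∧
      IsClosed (S : Set (lp E p)) :=
  ⟨lpTendstoZero 𝕜 E p l, Set.ext fun _ => mem_lpTendstoZero_iff,
    isClosed_lpTendstoZero 𝕜 E p l⟩

end LpTendstoZero

section DensityFilter

variable (F : ℕ → Finset ℕ)

theorem mu_nonneg (n : ℕ) (A : Set ℕ) : 0 ≤ mu F n A := by
  unfold mu
  positivity

theorem mu_mono (n : ℕ) : Monotone (mu F n) := by
  intro A B hAB
  unfold mu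
  gcongr
  exact (F n).finite_toSet.inter_of_right B

theorem mu_union_le (n : ℕ) (A B : Set ℕ) : mu F n (A ∪ B) ≤ mu F n A + mu F n B := by
  unfold mu
  rw [← add_div, Set.union_inter_distrib_right]
  gcongr
  exact_mod_cast Set.ncard_union_le _ _

/-- The filter dual to the ideal `I(F)`: it consists of the sets `A` with `mu F n Aᶜ → 0`. -/
def densityFilter : Filter ℕ :=
  comk (fun A => Tendsto (fun n => mu F n A) atTop (𝓝 0))
    (by simp [mu])
    (fun _ hB _ hAB => squeeze_zero (fun n => mu_nonneg F n _) (fun n => mu_mono F n hAB) hB)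
    (fun A hA B hB =>
      squeeze_zero (fun n => mu_nonneg F n _) (fun n => mu_union_le F n A B)
        (by simpa only [add_zero] using hA.add hB))

theorem eventually_densityFilter_iff {q : ℕ → Prop} :
    (∀ᶠ i in densityFilter F, q i) ↔ Tendsto (fun n => mu F n {i | ¬q i}) atTop (𝓝 0) :=
  Iff.rfl

end DensityFilter

/-- The set of bounded real sequences that are `I(F)`-convergent to `0` is a
closed linear subspace of `ℓ∞`. -/
theorem stmt11 (F : ℕ → Finset ℕ) (hne : ∀ n, (F n).Nonempty)
    (hcard : Tendsto (fun n => (F n).card) atTop atTop) :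
    ∃ S : Submodule ℝ (lp (fun _ : ℕ => ℝ) ⊤),
      (S : Set (lp (fun _ : ℕ => ℝ) ⊤)) =
        {f : lp (fun _ : ℕ => ℝ) ⊤ | ∀ ε : ℝ, 0 < ε →
          Tendsto (fun n => mu F n {i : ℕ | ε ≤ |f i|}) atTop (nhds 0)} ∧
      IsClosed (S : Set (lp (fun _ : ℕ => ℝ) ⊤)) := by
  simpa only [eventually_densityFilter_iff, not_lt, Real.norm_eq_abs] using
    stmt11_general ℝ (fun _ : ℕ => ℝ) ⊤ (densityFilter F)
end
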